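/- For every integer k ≥ 0 and every real number a > 1/2: ζ_HCB(1-k,a) = ((2a-1)·Γ(a+1)² / (a·Γ(2a+1))) · (2/3)^k · ( p_{k-1}(a,1/4) + 4^{a-1}·(2/√3)·B(1/4; a-1/2, 1/2)·q_{k-1}(1/4) ). In particular, ζ_HCB(1-k,a) lies in (Γ(a+1)²/Γ(2a+1))·( ℚ(a) + (4^a/√3)·B(1/4; a-1/2, 1/2)·ℚ(a) ). -/

import Mathlib

open Polynomial

/-- The generalized binomial coefficient `C(x,y) = Γ(x+1)/(Γ(y+1) Γ(x-y+1))`. -/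
noncomputable def genBinom (x y : ℝ) : ℝ :=
  Real.Gamma (x + 1) / (Real.Gamma (y + 1) * Real.Gamma (x - y + 1))

/-- The Hurwitz type central binomial series
`ζ_HCB(s,a) = ∑_{n≥0} 1 / ( C(2(n+a), n+a) (n+a)^s )`. -/
noncomputable def zetaHCB (s : ℤ) (a : ℝ) : ℝ :=
  ∑' n : ℕ, 1 / (genBinom (2 * ((n : ℝ) + a)) ((n : ℝ) + a) * ((n : ℝ) + a) ^ s)

/-- Lehmer's polynomials `q_k(x)` for `k ≥ -1`, shifted so that `lehmerQ n = q_{n-1}`: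
`q_{-1}(x) = 1` and `q_{k+1}(x) = (2(k+1)x+1) q_k(x) + 2x(1-x) q_k'(x)`. -/
noncomputable def lehmerQ : ℕ → Polynomial ℝ
  | 0 => 1
  | n + 1 => (C (2 * (n : ℝ)) * X + 1) * lehmerQ n + (2 * X * (1 - X)) * derivative (lehmerQ n)

/-- The polynomials `p_k(a,x)` for `k ≥ -1`, shifted so that `lehmerPa a n = p_{n-1}(a,·)`:
`p_{-1}(a,x) = 0` and `p_{k+1}(a,x) = 2((k+1-a)x+a) p_k(a,x) + 2x(1-x) ∂ₓp_k(a,x) + q_k(x)`. -/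
noncomputable def lehmerPa (a : ℝ) : ℕ → Polynomial ℝ
  | 0 => 0
  | n + 1 => C 2 * (C ((n : ℝ) - a) * X + C a) * lehmerPa a n
      + (2 * X * (1 - X)) * derivative (lehmerPa a n) + lehmerQ n

/-- The incomplete beta function `B(z; α, β) = ∫_0^z x^{α-1} (1-x)^{β-1} dx`. -/
noncomputable def incBeta (z α β : ℝ) : ℝ :=
  ∫ x in (0 : ℝ)..z, x ^ (α - 1) * (1 - x) ^ (β - 1)

/-!
Write `θ = x d/dx` and `S_k(x) = ∑ (n+a)^k c_n xⁿ` with `c_n = 4ⁿ / ((n+a) C(2(n+a), n+a))`, so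
that `ζ_HCB(1-k,a) = S_k(1/4)` and `S_{k+1} = (θ + a) S_k`. The ratio
`c_{n+1}/c_n = (n+a)/(n+a+1/2)` turns into `(1-x)(θ + a) S_0 = S_0/2 + (a-1/2) c_0`. Multiplied by
`x^{a-3/2} (1-x)^{-1/2}`, this equation becomes exact and expresses `S_0` through an incomplete
beta function. On the other hand, `F_k = (2(1-x))^k S_k` satisfies
`F_{k+1} = (2(1-x)(θ + a) + 2kx) F_k`, and by the same equation this operator carries
`(2a-1) c_0 p_{k-1} + S_0 q_{k-1}` to `(2a-1) c_0 p_k + S_0 q_k`.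
-/

section ShiftedEuler

variable {𝕜 : Type*}

/-- The shifted Euler operator `θ + a`, where `θ = x d/dx`, applied to `f` and evaluated at `x`. -/
noncomputable def shiftedEuler [NontriviallyNormedField 𝕜] (a : 𝕜) (f : 𝕜 → 𝕜) (x : 𝕜) : 𝕜 :=
  x * deriv f x + a * f x

open Asymptotics Filter

variable [RCLike 𝕜] {c : ℕ → 𝕜} {d : ℕ} {x : 𝕜}

lemma isBigO_natCast_mul (hc : c =O[atTop] fun n => (n : 𝕜) ^ d) :
    (fun n : ℕ => (n : 𝕜) * c n) =O[atTop] fun n => (n : 𝕜) ^ (d + 1) := by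
  simpa only [pow_succ'] using (isBigO_refl _ _).mul hc

lemma isBigO_natCast_add_mul (hc : c =O[atTop] fun n => (n : 𝕜) ^ d) (a : 𝕜) :
    (fun n : ℕ => ((n : 𝕜) + a) * c n) =O[atTop] fun n => (n : 𝕜) ^ (d + 1) := by
  have hconst : (fun _ : ℕ => a) =O[atTop] fun n => (n : 𝕜) :=
    (isLittleO_const_left.2 <| .inr <| by
      simpa [Function.comp_def] using tendsto_natCast_atTop_atTop (R := ℝ)).isBigO
  simpa only [pow_succ'] using ((isBigO_refl _ _).add hconst).mul hc

lemma summable_mul_pow_of_isBigO (hc : c =O[atTop] fun n => (n : 𝕜) ^ d) (hx : ‖x‖ < 1) :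
    Summable fun n => c n * x ^ n :=
  (summable_norm_mul_geometric_of_norm_lt_one' hx (by simpa only [Nat.cast_pow] using hc)).of_norm

lemma hasDerivAt_tsum_mul_pow (hc : c =O[atTop] fun n => (n : 𝕜) ^ d) (hx : ‖x‖ < 1) :
    HasDerivAt (fun y => ∑' n, c n * y ^ n) (∑' n, c n * (n * x ^ (n - 1))) x := by
  obtain ⟨r, hxr, hr1⟩ := exists_between hx
  have hr0 : 0 < r := (norm_nonneg x).trans_lt hxr
  have hr : ‖(r : 𝕜)‖ = r := by simp [abs_of_pos hr0]
  have hmaj : Summable fun n : ℕ => ‖(n : 𝕜) * c n * (r : 𝕜) ^ n‖ * r⁻¹ :=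
    (summable_mul_pow_of_isBigO (isBigO_natCast_mul hc) (hr.trans_lt hr1)).norm.mul_right _
  have hbound : ∀ n, ∀ y ∈ Metric.ball (0 : 𝕜) r,
      ‖c n * (n * y ^ (n - 1))‖ ≤ ‖(n : 𝕜) * c n * (r : 𝕜) ^ n‖ * r⁻¹ := by
    rintro (_ | n) y hy
    · simp
    · have hyr : ‖y‖ ≤ r := (mem_ball_zero_iff.1 hy).le
      calc ‖c (n + 1) * ((n + 1 : ℕ) * y ^ n)‖
          = ‖((n + 1 : ℕ) : 𝕜) * c (n + 1)‖ * ‖y‖ ^ n := by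
            rw [mul_left_comm, ← mul_assoc, norm_mul, norm_pow]
        _ ≤ ‖((n + 1 : ℕ) : 𝕜) * c (n + 1)‖ * r ^ n := by gcongr
        _ = ‖((n + 1 : ℕ) : 𝕜) * c (n + 1) * (r : 𝕜) ^ (n + 1)‖ * r⁻¹ := by
            rw [norm_mul _ ((r : 𝕜) ^ (n + 1)), norm_pow, hr, pow_succ]
            field_simp
  have hxball : x ∈ Metric.ball (0 : 𝕜) r := mem_ball_zero_iff.2 hxr
  exact hasDerivAt_tsum_of_isPreconnected hmaj Metric.isOpen_ball
    (convex_ball 0 r).isPreconnected (fun n y _ => (hasDerivAt_pow n y).const_mul (c n)) hbound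
    hxball (summable_mul_pow_of_isBigO hc hx) hxball

lemma shiftedEuler_tsum_mul_pow (hc : c =O[atTop] fun n => (n : 𝕜) ^ d) (hx : ‖x‖ < 1) (a : 𝕜) :
    shiftedEuler a (fun y => ∑' n, c n * y ^ n) x = ∑' n : ℕ, ((n : 𝕜) + a) * c n * x ^ n := by
  have hsplit : ∀ n : ℕ, (n : 𝕜) * c n * x ^ n + a * (c n * x ^ n) =
      ((n : 𝕜) + a) * c n * x ^ n := fun n => by ring
  rw [shiftedEuler, (hasDerivAt_tsum_mul_pow hc hx).deriv, ← tsum_congr hsplit,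
    (summable_mul_pow_of_isBigO (isBigO_natCast_mul hc) hx).tsum_add
      ((summable_mul_pow_of_isBigO hc hx).mul_left a), tsum_mul_left, ← tsum_mul_left]
  congr 1
  refine tsum_congr fun n => ?_
  rcases n with _ | n
  · simp
  · rw [Nat.add_sub_cancel]
    ring

lemma one_sub_mul_shiftedEuler_tsum_mul_pow (hc : c =O[atTop] fun n => (n : 𝕜) ^ d) (hx : ‖x‖ < 1)
    {a b : 𝕜} (hrec : ∀ n : ℕ, ((n : 𝕜) + 1 + a - b) * c (n + 1) = ((n : 𝕜) + a) * c n) :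
    (1 - x) * shiftedEuler a (fun y => ∑' n, c n * y ^ n) x =
      b * ∑' n, c n * x ^ n + (a - b) * c 0 := by
  have hS := summable_mul_pow_of_isBigO hc hx
  have hE := summable_mul_pow_of_isBigO (isBigO_natCast_add_mul hc a) hx
  have hshift : x * ∑' n : ℕ, ((n : 𝕜) + a) * c n * x ^ n =
      ∑' n : ℕ, (((n + 1 : ℕ) : 𝕜) + a) * c (n + 1) * x ^ (n + 1) -
        b * ∑' n : ℕ, c (n + 1) * x ^ (n + 1) := by
    rw [← tsum_mul_left, ← tsum_mul_left,
      ← ((summable_nat_add_iff 1).2 hE).tsum_sub (((summable_nat_add_iff 1).2 hS).mul_left b)]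
    refine tsum_congr fun n => ?_
    push_cast
    linear_combination (-x ^ (n + 1)) * hrec n
  rw [shiftedEuler_tsum_mul_pow hc hx, sub_mul, hshift, hE.tsum_eq_zero_add, hS.tsum_eq_zero_add]
  simp only [Nat.cast_zero, zero_add, pow_zero, mul_one]
  ring

end ShiftedEuler

section IncompleteBeta

open Set

variable {α β K x : ℝ} {f : ℝ → ℝ}

lemma intervalIntegrable_incBeta (hα : 0 < α) (β : ℝ) (hx : x < 1) :
    IntervalIntegrable (fun y : ℝ => y ^ (α - 1) * (1 - y) ^ (β - 1)) MeasureTheory.volume 0 x := by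
  refine (intervalIntegral.intervalIntegrable_rpow' (by linarith)).mul_continuousOn ?_
  refine ContinuousOn.rpow_const (by fun_prop) fun y hy => .inl ?_
  have hy1 : y < 1 := hy.2.trans_lt (max_lt one_pos hx)
  linarith

lemma hasDerivAt_rpow_mul_one_sub_rpow_mul (hf : DifferentiableAt ℝ f x) (hx : x ∈ Ioo 0 1)
    (hode : (1 - x) * shiftedEuler (α + β) f x = β * f x + K) :
    HasDerivAt (fun y => y ^ α * (1 - y) ^ β * f y) (K * (x ^ (α - 1) * (1 - x) ^ (β - 1))) x := by
  have hx0 : x ≠ 0 := hx.1.ne'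
  have hx1 : 1 - x ≠ 0 := (sub_pos.2 hx.2).ne'
  refine (((Real.hasDerivAt_rpow_const (.inl hx0)).mul
    (((hasDerivAt_id' x).const_sub 1).rpow_const (.inl hx1))).mul hf.hasDerivAt).congr_deriv ?_
  simp only [Pi.mul_apply, Real.rpow_sub_one hx0, Real.rpow_sub_one hx1]
  rw [shiftedEuler] at hode
  field_simp
  linear_combination x ^ α * (1 - x) ^ β * hode

theorem rpow_mul_one_sub_rpow_mul_eq_incBeta (hα : 0 < α) (hx : x ∈ Ico 0 1)
    (hcont : ContinuousOn f (Icc 0 x)) (hdiff : ∀ y ∈ Ioo 0 x, DifferentiableAt ℝ f y)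
    (hode : ∀ y ∈ Ioo 0 x, (1 - y) * shiftedEuler (α + β) f y = β * f y + K) :
    x ^ α * (1 - x) ^ β * f x = K * incBeta x α β := by
  have hweight : ContinuousOn (fun y : ℝ => y ^ α * (1 - y) ^ β) (Icc 0 x) :=
    (Real.continuous_rpow_const hα.le).continuousOn.mul <|
      ContinuousOn.rpow_const (by fun_prop) fun y hy => .inl (by linarith [hy.2, hx.2])
  have hftc := intervalIntegral.integral_eq_sub_of_hasDerivAt_of_le hx.1 (hweight.mul hcont)
    (fun y hy => hasDerivAt_rpow_mul_one_sub_rpow_mul (hdiff y hy) ⟨hy.1, hy.2.trans hx.2⟩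
      (hode y hy))
    ((intervalIntegrable_incBeta hα β hx.2).const_mul K)
  simpa [incBeta, Real.zero_rpow hα.ne'] using hftc.symm

end IncompleteBeta

section Lehmer

open Filter Topology

variable {a K x : ℝ} {f g : ℝ → ℝ} {k : ℕ}

/-- The operator `2(1-x)(θ + a) + 2kx`, where `θ = x d/dx`, which raises the index of Lehmer's
polynomials, applied to `f` and evaluated at `x`. -/
noncomputable def lehmerStep (a : ℝ) (k : ℕ) (f : ℝ → ℝ) (x : ℝ) : ℝ :=
  2 * (1 - x) * shiftedEuler a f x + 2 * k * x * f x

lemma lehmerStep_congr (h : f =ᶠ[𝓝 x] g) : lehmerStep a k f x = lehmerStep a k g x := by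
  rw [lehmerStep, lehmerStep, shiftedEuler, shiftedEuler, h.deriv_eq, h.eq_of_nhds]

lemma lehmerStep_pow_mul (hf : DifferentiableAt ℝ f x) :
    lehmerStep a k (fun y => (2 * (1 - y)) ^ k * f y) x =
      (2 * (1 - x)) ^ (k + 1) * shiftedEuler a f x := by
  have hderiv := ((((hasDerivAt_id' x).const_sub 1).const_mul 2).fun_pow k).fun_mul hf.hasDerivAt
  rw [lehmerStep, shiftedEuler, shiftedEuler, hderiv.deriv]
  rcases k with _ | k
  · simp
  · rw [Nat.add_sub_cancel]
    ring

lemma lehmerStep_lehmerPa_add_lehmerQ (hf : DifferentiableAt ℝ f x)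
    (hode : (1 - x) * shiftedEuler a f x = 1 / 2 * f x + K) :
    lehmerStep a k (fun y => 2 * K * (lehmerPa a k).eval y + f y * (lehmerQ k).eval y) x =
      2 * K * (lehmerPa a (k + 1)).eval x + f x * (lehmerQ (k + 1)).eval x := by
  have hderiv := (((lehmerPa a k).hasDerivAt x).const_mul (2 * K)).fun_add
    (hf.hasDerivAt.fun_mul ((lehmerQ k).hasDerivAt x))
  rw [shiftedEuler] at hode
  rw [lehmerStep, shiftedEuler, hderiv.deriv]
  simp only [lehmerPa, lehmerQ, eval_add, eval_mul, eval_sub, eval_C, eval_X, eval_one, eval_ofNat]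
  linear_combination 2 * (lehmerQ k).eval x * hode

theorem pow_mul_eq_lehmerPa_add_lehmerQ {s : Set ℝ} (hs : IsOpen s) {S : ℕ → ℝ → ℝ}
    (hdiff : ∀ k, ∀ y ∈ s, DifferentiableAt ℝ (S k) y)
    (hsucc : ∀ k, ∀ y ∈ s, shiftedEuler a (S k) y = S (k + 1) y)
    (hode : ∀ y ∈ s, (1 - y) * shiftedEuler a (S 0) y = 1 / 2 * S 0 y + K)
    (k : ℕ) (hx : x ∈ s) :
    (2 * (1 - x)) ^ k * S k x =
      2 * K * (lehmerPa a k).eval x + S 0 x * (lehmerQ k).eval x := by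
  induction k generalizing x with
  | zero => simp [lehmerPa, lehmerQ]
  | succ k ih =>
    have hnear : (fun y => (2 * (1 - y)) ^ k * S k y) =ᶠ[𝓝 x]
        fun y => 2 * K * (lehmerPa a k).eval y + S 0 y * (lehmerQ k).eval y :=
      eventually_of_mem (hs.mem_nhds hx) fun y hy => ih hy
    rw [← hsucc k x hx, ← lehmerStep_pow_mul (hdiff k x hx), lehmerStep_congr hnear,
      lehmerStep_lehmerPa_add_lehmerQ (hdiff 0 x hx) (hode x hx)]

end Lehmer

section Rationality

variable {R : Type*} [CommRing R]

lemma exists_map_eq_lehmerQ (φ : R →+* ℝ) (k : ℕ) : ∃ q : R[X], q.map φ = lehmerQ k := by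
  induction k with
  | zero => exact ⟨1, Polynomial.map_one φ⟩
  | succ k ih =>
    obtain ⟨q, hq⟩ := ih
    exact ⟨(C (2 * (k : R)) * X + 1) * q + 2 * X * (1 - X) * derivative q,
      by simp [lehmerQ, ← hq, derivative_map, map_ofNat]⟩

lemma exists_map_eq_lehmerPa (φ : R →+* ℝ) (r : R) (k : ℕ) :
    ∃ p : R[X], p.map φ = lehmerPa (φ r) k := by
  induction k with
  | zero => exact ⟨0, Polynomial.map_zero φ⟩
  | succ k ih =>
    obtain ⟨p, hp⟩ := ih
    obtain ⟨q, hq⟩ := exists_map_eq_lehmerQ φ k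
    exact ⟨C 2 * (C ((k : R) - r) * X + C r) * p + 2 * X * (1 - X) * derivative p + q,
      by simp [lehmerPa, ← hp, ← hq, derivative_map, map_ofNat]⟩

lemma exists_aeval_eq_eval_lehmerPa (a : ℝ) (k : ℕ) (r : ℚ) :
    ∃ P : ℚ[X], aeval a P = (lehmerPa a k).eval (r : ℝ) := by
  obtain ⟨p, hp⟩ := exists_map_eq_lehmerPa (aeval a : ℚ[X] →ₐ[ℚ] ℝ).toRingHom X k
  refine ⟨p.eval (C r), ?_⟩
  have h := eval_map_apply (p := p) (f := (aeval a : ℚ[X] →ₐ[ℚ] ℝ).toRingHom) (C r)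
  rw [hp] at h
  simpa using h.symm

lemma exists_ratCast_eq_eval_lehmerQ (k : ℕ) (r : ℚ) :
    ∃ t : ℚ, (t : ℝ) = (lehmerQ k).eval (r : ℝ) := by
  obtain ⟨q, hq⟩ := exists_map_eq_lehmerQ (algebraMap ℚ ℝ) k
  exact ⟨q.eval r, by rw [← hq]; exact (eval_map_apply (f := algebraMap ℚ ℝ) r).symm⟩

end Rationality

section HurwitzCentralBinomial

open Asymptotics Filter Set

variable {a x y : ℝ}

lemma genBinom_two_mul_self (y : ℝ) :
    genBinom (2 * y) y = Real.Gamma (2 * y + 1) / Real.Gamma (y + 1) ^ 2 := by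
  rw [genBinom, show 2 * y - y = y by ring, sq]

lemma genBinom_two_mul_self_pos (hy : 0 < y) : 0 < genBinom (2 * y) y := by
  rw [genBinom_two_mul_self]
  exact div_pos (Real.Gamma_pos_of_pos (by positivity))
    (pow_pos (Real.Gamma_pos_of_pos (by positivity)) 2)

lemma add_one_mul_genBinom_two_mul_add_one (hy : 0 < y) :
    (y + 1) * genBinom (2 * (y + 1)) (y + 1) = 2 * (2 * y + 1) * genBinom (2 * y) y := by
  have hΓ : Real.Gamma (y + 1) ≠ 0 := (Real.Gamma_pos_of_pos (by positivity)).ne'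
  rw [genBinom_two_mul_self, genBinom_two_mul_self,
    show 2 * (y + 1) + 1 = 2 * y + 1 + 1 + 1 by ring,
    Real.Gamma_add_one (s := 2 * y + 1 + 1) (by positivity),
    Real.Gamma_add_one (s := 2 * y + 1) (by positivity),
    Real.Gamma_add_one (s := y + 1) (by positivity)]
  field_simp
  ring

/-- The coefficient `c_n = 4ⁿ / ((n+a) C(2(n+a), n+a))` of the generating series `hcbSeries`; the
factor `4ⁿ` normalises its radius of convergence to `1`. -/
noncomputable def hcbCoeff (a : ℝ) (n : ℕ) : ℝ :=
  4 ^ n / (genBinom (2 * ((n : ℝ) + a)) ((n : ℝ) + a) * ((n : ℝ) + a))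

/-- The generating series `S_k(x) = ∑ (n+a)^k c_n xⁿ`, whose value at `1/4` is `ζ_HCB(1-k,a)`. -/
noncomputable def hcbSeries (a : ℝ) (k : ℕ) (x : ℝ) : ℝ :=
  ∑' n : ℕ, ((n : ℝ) + a) ^ k * hcbCoeff a n * x ^ n

lemma zetaHCB_eq_hcbSeries (ha : 0 < a) (k : ℕ) : zetaHCB (1 - k) a = hcbSeries a k (1 / 4) := by
  refine tsum_congr fun n => ?_
  have hna : (n : ℝ) + a ≠ 0 := by positivity
  rw [hcbCoeff, zpow_sub₀ hna, zpow_one, zpow_natCast, one_div_pow]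
  field_simp

lemma hcbCoeff_zero (a : ℝ) :
    hcbCoeff a 0 = Real.Gamma (a + 1) ^ 2 / (a * Real.Gamma (2 * a + 1)) := by
  rw [hcbCoeff, Nat.cast_zero, zero_add, genBinom_two_mul_self, pow_zero, div_mul_eq_mul_div,
    one_div_div, mul_comm a]

lemma hcbCoeff_pos (ha : 0 < a) (n : ℕ) : 0 < hcbCoeff a n := by
  have hna : 0 < (n : ℝ) + a := by positivity
  exact div_pos (by positivity) (mul_pos (genBinom_two_mul_self_pos hna) hna)

lemma hcbCoeff_succ (ha : 0 < a) (n : ℕ) :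
    ((n : ℝ) + 1 + a - 1 / 2) * hcbCoeff a (n + 1) = ((n : ℝ) + a) * hcbCoeff a n := by
  have hna : 0 < (n : ℝ) + a := by positivity
  have := genBinom_two_mul_self_pos hna
  rw [hcbCoeff, hcbCoeff, Nat.cast_succ, add_right_comm (n : ℝ) 1 a,
    mul_comm (genBinom (2 * ((n : ℝ) + a + 1)) _), add_one_mul_genBinom_two_mul_add_one hna]
  field_simp
  ring

lemma antitone_hcbCoeff (ha : 0 < a) : Antitone (hcbCoeff a) := by
  refine antitone_nat_of_succ_le fun n => ?_
  have hna : 0 < (n : ℝ) + a := by positivity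
  refine le_of_mul_le_mul_left ?_ hna
  linarith [hcbCoeff_succ ha n, hcbCoeff_pos ha (n + 1)]

lemma isBigO_pow_mul_hcbCoeff (ha : 0 < a) (k : ℕ) :
    (fun n : ℕ => ((n : ℝ) + a) ^ k * hcbCoeff a n) =O[atTop] fun n => (n : ℝ) ^ k := by
  induction k with
  | zero =>
    refine .of_bound (hcbCoeff a 0) (.of_forall fun n => ?_)
    simpa [abs_of_pos (hcbCoeff_pos ha n)] using antitone_hcbCoeff ha n.zero_le
  | succ k ih => simpa only [pow_succ', mul_assoc] using isBigO_natCast_add_mul ih a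

lemma differentiableAt_hcbSeries (ha : 0 < a) (k : ℕ) (hx : ‖x‖ < 1) :
    DifferentiableAt ℝ (hcbSeries a k) x :=
  (hasDerivAt_tsum_mul_pow (isBigO_pow_mul_hcbCoeff ha k) hx).differentiableAt

lemma shiftedEuler_hcbSeries (ha : 0 < a) (k : ℕ) (hx : ‖x‖ < 1) :
    shiftedEuler a (hcbSeries a k) x = hcbSeries a (k + 1) x :=
  (shiftedEuler_tsum_mul_pow (isBigO_pow_mul_hcbCoeff ha k) hx a).trans <|
    tsum_congr fun n => by ring

lemma one_sub_mul_shiftedEuler_hcbSeries_zero (ha : 0 < a) (hx : ‖x‖ < 1) :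
    (1 - x) * shiftedEuler a (hcbSeries a 0) x =
      1 / 2 * hcbSeries a 0 x + (a - 1 / 2) * hcbCoeff a 0 := by
  have h := one_sub_mul_shiftedEuler_tsum_mul_pow (isBigO_pow_mul_hcbCoeff ha 0) hx
    (by simpa only [pow_zero, one_mul] using hcbCoeff_succ ha)
  rwa [pow_zero, one_mul] at h

lemma hcbSeries_zero_eq_incBeta (ha : 1 / 2 < a) (hx : x ∈ Ioo 0 1) :
    hcbSeries a 0 x =
      (a - 1 / 2) * hcbCoeff a 0 * (x ^ (1 / 2 - a) / √(1 - x)) *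
        incBeta x (a - 1 / 2) (1 / 2) := by
  have ha0 : 0 < a := by linarith
  have hnorm : ∀ y ∈ Icc 0 x, ‖y‖ < 1 := fun y hy => by
    rw [Real.norm_of_nonneg hy.1]
    exact hy.2.trans_lt hx.2
  have h := rpow_mul_one_sub_rpow_mul_eq_incBeta (β := 1 / 2) (sub_pos.2 ha) ⟨hx.1.le, hx.2⟩
    (fun y hy => (differentiableAt_hcbSeries ha0 0 (hnorm y hy)).continuousAt.continuousWithinAt)
    (fun y hy => differentiableAt_hcbSeries ha0 0 (hnorm y (Ioo_subset_Icc_self hy)))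
    (fun y hy => by
      rw [sub_add_cancel]
      exact one_sub_mul_shiftedEuler_hcbSeries_zero ha0 (hnorm y (Ioo_subset_Icc_self hy)))
  have hweight : x ^ (a - 1 / 2) * √(1 - x) ≠ 0 :=
    mul_ne_zero (Real.rpow_pos_of_pos hx.1 _).ne' (Real.sqrt_pos.2 (sub_pos.2 hx.2)).ne'
  rw [← Real.sqrt_eq_rpow] at h
  rw [← neg_sub a, Real.rpow_neg hx.1.le, eq_div_of_mul_eq hweight ((mul_comm _ _).trans h)]
  ring

theorem hcbSeries_eq_lehmer (ha : 1 / 2 < a) (k : ℕ) (hx : x ∈ Ioo 0 1) :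
    hcbSeries a k x =
      (2 * a - 1) * hcbCoeff a 0 / (2 * (1 - x)) ^ k *
        ((lehmerPa a k).eval x +
          x ^ (1 / 2 - a) / (2 * √(1 - x)) * incBeta x (a - 1 / 2) (1 / 2) *
            (lehmerQ k).eval x) := by
  have ha0 : 0 < a := by linarith
  have hnorm : ∀ y ∈ Ioo (0 : ℝ) 1, ‖y‖ < 1 := fun y hy => by
    rw [Real.norm_of_nonneg hy.1.le]
    exact hy.2
  have h := pow_mul_eq_lehmerPa_add_lehmerQ isOpen_Ioo
    (fun j y hy => differentiableAt_hcbSeries ha0 j (hnorm y hy))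
    (fun j y hy => shiftedEuler_hcbSeries ha0 j (hnorm y hy))
    (fun y hy => one_sub_mul_shiftedEuler_hcbSeries_zero ha0 (hnorm y hy)) k hx
  have hpow : (2 * (1 - x)) ^ k ≠ 0 := pow_ne_zero k (by linarith [hx.2])
  rw [div_mul_eq_mul_div, eq_div_iff hpow, mul_comm, h, hcbSeries_zero_eq_incBeta ha hx]
  ring

theorem zetaHCB_one_sub_natCast (ha : 1 / 2 < a) (k : ℕ) :
    zetaHCB (1 - k) a =
      (2 * a - 1) * Real.Gamma (a + 1) ^ 2 / (a * Real.Gamma (2 * a + 1)) * (2 / 3) ^ k *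
        ((lehmerPa a k).eval (1 / 4) +
          (4 : ℝ) ^ (a - 1) * (2 / √3) * incBeta (1 / 4) (a - 1 / 2) (1 / 2) *
            (lehmerQ k).eval (1 / 4)) := by
  have hsqrt4 : √(4 : ℝ) = 2 := by
    rw [show (4 : ℝ) = 2 ^ 2 by norm_num, Real.sqrt_sq zero_le_two]
  have hsqrt : √(1 - 1 / 4 : ℝ) = √3 / 2 := by
    rw [show (1 - 1 / 4 : ℝ) = 3 / 4 by norm_num, Real.sqrt_div zero_le_three, hsqrt4]
  have hpow : (1 / 4 : ℝ) ^ (1 / 2 - a) = 2 * 4 ^ (a - 1) := by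
    rw [one_div, Real.inv_rpow zero_le_four, ← Real.rpow_neg zero_le_four,
      show -(1 / 2 - a) = 1 / 2 + (a - 1) by ring, Real.rpow_add four_pos, ← Real.sqrt_eq_rpow,
      hsqrt4]
  rw [zetaHCB_eq_hcbSeries (by linarith), hcbSeries_eq_lehmer ha k (by norm_num), hcbCoeff_zero,
    hsqrt, hpow, show (2 * (1 - 1 / 4) : ℝ) = (2 / 3)⁻¹ by norm_num, inv_pow, div_inv_eq_mul]
  ring

end HurwitzCentralBinomial

/-- For every integer `k ≥ 0` and real `a > 1/2`:
`ζ_HCB(1-k,a) = ((2a-1) Γ(a+1)²/(a Γ(2a+1))) (2/3)^k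
  ( p_{k-1}(a,1/4) + 4^{a-1} (2/√3) B(1/4; a-1/2, 1/2) q_{k-1}(1/4) )`;
in particular `ζ_HCB(1-k,a)` lies in
`(Γ(a+1)²/Γ(2a+1)) ( ℚ(a) + (4^a/√3) B(1/4; a-1/2, 1/2) ℚ(a) )`, where elements of `ℚ(a)`
are quotients of rational polynomials evaluated at `a`. -/
theorem zetaHCB_nonpos_values (k : ℕ) (a : ℝ) (ha : 1 / 2 < a) :
    zetaHCB (1 - k) a =
      (2 * a - 1) * Real.Gamma (a + 1) ^ 2 / (a * Real.Gamma (2 * a + 1)) * (2 / 3) ^ k *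
        ((lehmerPa a k).eval (1 / 4) +
          (4 : ℝ) ^ (a - 1) * (2 / Real.sqrt 3) * incBeta (1 / 4) (a - 1 / 2) (1 / 2) *
            (lehmerQ k).eval (1 / 4)) ∧
    ∃ f₁ g₁ f₂ g₂ : Polynomial ℚ,
      Polynomial.aeval a g₁ ≠ 0 ∧ Polynomial.aeval a g₂ ≠ 0 ∧
      zetaHCB (1 - k) a =
        Real.Gamma (a + 1) ^ 2 / Real.Gamma (2 * a + 1) *
          (Polynomial.aeval a f₁ / Polynomial.aeval a g₁ +
            (4 : ℝ) ^ a / Real.sqrt 3 * incBeta (1 / 4) (a - 1 / 2) (1 / 2) *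
              (Polynomial.aeval a f₂ / Polynomial.aeval a g₂)) := by
  have hformula := zetaHCB_one_sub_natCast ha k
  refine ⟨hformula, ?_⟩
  have ha0 : a ≠ 0 := by linarith
  obtain ⟨P, hP⟩ := exists_aeval_eq_eval_lehmerPa a k (1 / 4)
  obtain ⟨t, ht⟩ := exists_ratCast_eq_eval_lehmerQ k (1 / 4)
  push_cast at hP ht
  refine ⟨C ((2 / 3) ^ k) * (2 * X - 1) * P, X, C ((2 / 3) ^ k / 2 * t) * (2 * X - 1), X,
    by simpa using ha0, by simpa using ha0, ?_⟩
  rw [hformula, Real.rpow_sub_one four_ne_zero]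
  simp only [map_mul, map_sub, map_one, map_ofNat, aeval_X, aeval_C, eq_ratCast, hP]
  push_cast
  rw [ht]
  field_simp
  ring
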